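/- arXiv:2206.02154 — 2 statements merged into one kernel-verified Lean document; each statement's English description precedes it below -/
import Mathlib

section
/- Characterization of the space C_{-1,(k)}(0,∞): let (κ, k) ∈ L₁. A function f belongs to C_{-1,(k)}(0,∞), i.e. f = k * φ for some φ ∈ C_{-1}(0,∞), if and only if the function κ * f belongs to C¹_{-1}(0,∞) and lim_{t→0+} (κ * f)(t) = 0. -/
open Real Filter MeasureTheory intervalIntegral

/-- The Laplace convolution `(f * g)(t) = ∫_0^t f(t-τ) g(τ) dτ`. -/
noncomputable def lconv (f g : ℝ → ℝ) : ℝ → ℝ :=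
  fun t => ∫ τ in (0:ℝ)..t, f (t - τ) * g τ

/-- The space `C_{-1}(0,∞)`: functions representable as `t^p f₁(t)` with `p > -1`
and `f₁` continuous on `[0,∞)`. -/
def CMinusOne (f : ℝ → ℝ) : Prop :=
  ∃ p : ℝ, p > -1 ∧ ∃ f₁ : ℝ → ℝ, ContinuousOn f₁ (Set.Ici 0) ∧
    ∀ t > (0:ℝ), f t = t ^ p * f₁ t


/-- The class `L₁` of Sonin kernel pairs: `κ, k ∈ C_{-1}(0,∞)` with `(κ * k)(t) = 1`
for all `t > 0`. -/
def SoninPair (κ k : ℝ → ℝ) : Prop :=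
  CMinusOne κ ∧ CMinusOne k ∧ ∀ t > (0:ℝ), lconv κ k t = 1


/-- The space `C¹_{-1}(0,∞)`: functions from `C_{-1}(0,∞)` that are differentiable
on `(0,∞)`, extend continuously to `t = 0`, and whose derivative belongs to
`C_{-1}(0,∞)`. -/
def CMinusOneC1 (f : ℝ → ℝ) : Prop :=
  CMinusOne f ∧ (∀ t > (0:ℝ), DifferentiableAt ℝ f t) ∧
    (∃ c : ℝ, Tendsto f (nhdsWithin 0 (Set.Ioi 0)) (nhds c)) ∧
    CMinusOne (deriv f)

/-- Replace the continuous factor by one continuous on all of `ℝ`. -/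
lemma CMinusOne.exists_cont {f : ℝ → ℝ} (hf : CMinusOne f) :
    ∃ p : ℝ, p > -1 ∧ ∃ f₁ : ℝ → ℝ, Continuous f₁ ∧ ∀ t > (0:ℝ), f t = t ^ p * f₁ t := by
  obtain ⟨p, hp, f₁, hc, h⟩ := hf
  refine ⟨p, hp, fun x => f₁ (max 0 x), ?_, ?_⟩
  · exact hc.comp_continuous (by fun_prop) (fun x => by simp)
  · intro t ht
    simp only [h t ht, max_eq_right ht.le]

lemma CMinusOne.congr {f g : ℝ → ℝ} (hf : CMinusOne f) (h : ∀ t > (0:ℝ), g t = f t) :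
    CMinusOne g := by
  obtain ⟨p, hp, f₁, hc, h'⟩ := hf
  exact ⟨p, hp, f₁, hc, fun t ht => by rw [h t ht, h' t ht]⟩

lemma CMinusOne.norm {f : ℝ → ℝ} (hf : CMinusOne f) : CMinusOne (fun t => ‖f t‖) := by
  obtain ⟨p, hp, f₁, hc, h'⟩ := hf
  refine ⟨p, hp, fun t => ‖f₁ t‖, hc.norm, fun t ht => ?_⟩
  simp only [h' t ht, norm_mul, Real.norm_of_nonneg (Real.rpow_nonneg ht.le p)]

lemma cMinusOne_rpow {p : ℝ} (hp : p > -1) : CMinusOne (fun t => t ^ p) :=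
  ⟨p, hp, fun _ => 1, continuousOn_const, fun t _ => by simp⟩

lemma cMinusOne_one : CMinusOne (fun _ => 1) :=
  ⟨0, by norm_num, fun _ => 1, continuousOn_const, fun t _ => by simp⟩

lemma CMinusOne.continuousOn {f : ℝ → ℝ} (hf : CMinusOne f) : ContinuousOn f (Set.Ioi 0) := by
  obtain ⟨p, hp, f₁, hc, h⟩ := hf.exists_cont
  have : ContinuousOn (fun t : ℝ => t ^ p * f₁ t) (Set.Ioi 0) := by
    refine ContinuousOn.mul ?_ hc.continuousOn
    intro t ht
    exact (Real.continuousAt_rpow_const t p (Or.inl (ne_of_gt ht))).continuousWithinAt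
  exact this.congr (fun t ht => h t ht)

lemma CMinusOne.intervalIntegrable {f : ℝ → ℝ} (hf : CMinusOne f) {c : ℝ} (hc0 : 0 ≤ c) :
    IntervalIntegrable f volume 0 c := by
  obtain ⟨p, hp, f₁, hc, h⟩ := hf.exists_cont
  have : IntervalIntegrable (fun t : ℝ => t ^ p * f₁ t) volume 0 c :=
    (intervalIntegral.intervalIntegrable_rpow' hp).mul_continuousOn hc.continuousOn
  refine this.congr (fun t ht => ?_)
  rw [Set.uIoc_of_le hc0] at ht
  exact (h t ht.1).symm

lemma lconv_comm (f g : ℝ → ℝ) : lconv f g = lconv g f := by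
  ext t
  have := intervalIntegral.integral_comp_sub_left (a := 0) (b := t)
    (fun τ => f τ * g (t - τ)) t
  simp only [sub_sub_cancel, sub_self, sub_zero] at this
  unfold lconv
  rw [this]
  exact intervalIntegral.integral_congr (fun x _ => mul_comm _ _)

lemma half_integrable {f g : ℝ → ℝ} (hf : CMinusOne f) (hg : CMinusOne g) {t : ℝ} (ht : 0 < t) :
    IntervalIntegrable (fun τ => f (t - τ) * g τ) volume 0 (t / 2) := by
  refine (hg.intervalIntegrable (by positivity)).continuousOn_mul ?_
  refine hf.continuousOn.comp (by fun_prop) ?_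
  intro x hx
  rw [Set.uIcc_of_le (by positivity)] at hx
  simp only [Set.mem_Ioi]
  linarith [hx.2]

lemma lconv_integrable {f g : ℝ → ℝ} (hf : CMinusOne f) (hg : CMinusOne g) {t : ℝ} (ht : 0 < t) :
    IntervalIntegrable (fun τ => f (t - τ) * g τ) volume 0 t := by
  refine (half_integrable hf hg ht).trans ?_
  have h := ((half_integrable hg hf ht).comp_sub_left t).symm
  simp only [sub_sub_cancel, sub_zero] at h
  have e : t - t / 2 = t / 2 := by ring
  rw [e] at h
  exact h.congr (fun x _ => mul_comm _ _)

lemma CMinusOne.lconv {f g : ℝ → ℝ} (hf : CMinusOne f) (hg : CMinusOne g) :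
    CMinusOne (lconv f g) := by
  obtain ⟨p, hp, f₁, hfc, hf1⟩ := hf.exists_cont
  obtain ⟨q, hq, g₁, hgc, hg1⟩ := hg.exists_cont
  have hB : IntervalIntegrable (fun s : ℝ => (1 - s) ^ p * s ^ q) volume 0 1 :=
    lconv_integrable (cMinusOne_rpow hp) (cMinusOne_rpow hq) one_pos
  refine ⟨p + q + 1, by linarith, fun t => ∫ s in (0:ℝ)..1,
    ((1 - s) ^ p * s ^ q) * (f₁ (t * (1 - s)) * g₁ (t * s)), ?_, ?_⟩
  · refine Continuous.continuousOn (continuous_iff_continuousAt.2 fun t₀ => ?_)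
    obtain ⟨M, hM⟩ := (isCompact_Icc (a := -(|t₀| + 1)) (b := |t₀| + 1)).exists_bound_of_continuousOn
      hfc.continuousOn
    obtain ⟨N, hN⟩ := (isCompact_Icc (a := -(|t₀| + 1)) (b := |t₀| + 1)).exists_bound_of_continuousOn
      hgc.continuousOn
    refine intervalIntegral.continuousAt_of_dominated_interval
      (bound := fun s => ‖(1 - s) ^ p * s ^ q‖ * (M * N)) ?_ ?_ (hB.norm.mul_const _) ?_
    · refine Eventually.of_forall fun t => ?_
      have : IntervalIntegrable (fun s : ℝ => ((1 - s) ^ p * s ^ q) *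
          (f₁ (t * (1 - s)) * g₁ (t * s))) volume 0 1 :=
        hB.mul_continuousOn (by fun_prop)
      exact this.def'.aestronglyMeasurable
    · have : ∀ᶠ t in nhds t₀, |t| < |t₀| + 1 :=
        (continuous_abs.tendsto t₀).eventually (gt_mem_nhds (by linarith))
      filter_upwards [this] with t ht
      refine Eventually.of_forall fun s hs => ?_
      rw [Set.uIoc_of_le zero_le_one] at hs
      have key : ∀ r : ℝ, 0 ≤ r → r ≤ 1 → t * r ∈ Set.Icc (-(|t₀| + 1)) (|t₀| + 1) := by
        intro r h0 h1
        rw [Set.mem_Icc, ← abs_le, abs_mul, abs_of_nonneg h0]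
        nlinarith [abs_nonneg t]
      rw [norm_mul, norm_mul (f₁ _)]
      have h1 := hM _ (key (1 - s) (by linarith [hs.2]) (by linarith [hs.1]))
      have h2 := hN _ (key s hs.1.le hs.2)
      have h3 := (norm_nonneg _).trans h1
      gcongr
    · refine Eventually.of_forall fun s _ => ?_
      exact Continuous.continuousAt (by fun_prop)
  · intro t ht
    have h := intervalIntegral.smul_integral_comp_mul_left (a := 0) (b := 1)
      (fun τ => f (t - τ) * g τ) t
    simp only [mul_zero, mul_one, smul_eq_mul] at h
    unfold _root_.lconv
    rw [← h, ← intervalIntegral.integral_const_mul, ← intervalIntegral.integral_const_mul]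
    rw [intervalIntegral.integral_of_le zero_le_one, intervalIntegral.integral_of_le zero_le_one,
      integral_Ioc_eq_integral_Ioo, integral_Ioc_eq_integral_Ioo]
    refine setIntegral_congr_fun measurableSet_Ioo fun s hs => ?_
    have hs1 : 0 < 1 - s := by linarith [hs.2]
    have e : t - t * s = t * (1 - s) := by ring
    rw [e, hf1 _ (mul_pos ht hs1), hg1 _ (mul_pos ht hs.1), Real.mul_rpow ht.le hs1.le,
      Real.mul_rpow ht.le hs.1.le, Real.rpow_add ht, Real.rpow_add ht, Real.rpow_one]
    ring

lemma lconv_congr_right {f g h : ℝ → ℝ} (hgh : ∀ t > (0:ℝ), g t = h t) {t : ℝ} (ht : 0 < t) :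
    lconv f g t = lconv f h t := by
  unfold lconv
  refine intervalIntegral.integral_congr_ae (Eventually.of_forall fun s hs => ?_)
  rw [Set.uIoc_of_le ht.le] at hs
  rw [hgh s hs.1]

lemma lconv_congr_left {f g h : ℝ → ℝ} (hgh : ∀ t > (0:ℝ), g t = h t) {t : ℝ} (ht : 0 < t) :
    lconv g f t = lconv h f t := by
  rw [lconv_comm g, lconv_comm h]
  exact lconv_congr_right hgh ht

lemma lconv_one {f : ℝ → ℝ} (t : ℝ) : lconv (fun _ => 1) f t = ∫ s in (0:ℝ)..t, f s := by
  simp [lconv]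

lemma conv_indicator (f g : ℝ → ℝ) :
    convolution (Set.indicator (Set.Ioi 0) f) (Set.indicator (Set.Ioi 0) g)
      (ContinuousLinearMap.mul ℝ ℝ) volume = Set.indicator (Set.Ioi 0) (lconv f g) := by
  rw [← posConvolution_eq_convolution_indicator f g (ContinuousLinearMap.mul ℝ ℝ) volume, lconv_comm]
  unfold posConvolution lconv
  simp only [ContinuousLinearMap.mul_apply', mul_comm]

lemma conv_exists {f g : ℝ → ℝ} (hf : CMinusOne f) (hg : CMinusOne g) (x : ℝ) :
    ConvolutionExistsAt (Set.indicator (Set.Ioi 0) f) (Set.indicator (Set.Ioi 0) g) x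
      (ContinuousLinearMap.mul ℝ ℝ) volume := by
  unfold ConvolutionExistsAt
  have e : (fun t => ContinuousLinearMap.mul ℝ ℝ (Set.indicator (Set.Ioi 0) f t)
      (Set.indicator (Set.Ioi 0) g (x - t))) =
      Set.indicator (Set.Ioo 0 x) (fun t => g (x - t) * f t) := by
    ext t
    simp only [ContinuousLinearMap.mul_apply', Set.indicator_apply, Set.mem_Ioi, Set.mem_Ioo,
      sub_pos]
    by_cases h1 : 0 < t <;> by_cases h2 : t < x <;> simp [h1, h2, mul_comm]
  rw [e, integrable_indicator_iff measurableSet_Ioo]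
  rcases le_or_gt x 0 with hx | hx
  · rw [Set.Ioo_eq_empty (by linarith)]
    exact integrableOn_empty
  · have := lconv_integrable hg hf hx
    rw [intervalIntegrable_iff_integrableOn_Ioo_of_le hx.le] at this
    exact this

lemma ind_meas {f : ℝ → ℝ} (hf : CMinusOne f) :
    AEStronglyMeasurable (Set.indicator (Set.Ioi 0) f) volume := by
  rw [aestronglyMeasurable_indicator_iff measurableSet_Ioi]
  exact hf.continuousOn.aestronglyMeasurable measurableSet_Ioi

lemma norm_ind (f : ℝ → ℝ) : (fun x => ‖Set.indicator (Set.Ioi 0) f x‖) =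
    Set.indicator (Set.Ioi 0) (fun x => ‖f x‖) := by
  ext x
  exact _root_.norm_indicator_eq_indicator_norm ..

lemma lconv_assoc {a b c : ℝ → ℝ} (ha : CMinusOne a) (hb : CMinusOne b) (hc : CMinusOne c)
    {t : ℝ} (ht : 0 < t) : lconv (lconv a b) c t = lconv a (lconv b c) t := by
  have h := convolution_assoc (μ := volume) (ν := volume) (ContinuousLinearMap.mul ℝ ℝ)
    (ContinuousLinearMap.mul ℝ ℝ)
    (ContinuousLinearMap.mul ℝ ℝ) (ContinuousLinearMap.mul ℝ ℝ)
    (fun x y z => by simp [mul_assoc]) (x₀ := t) (ind_meas ha) (ind_meas hb) (ind_meas hc)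
    (Eventually.of_forall fun y => conv_exists ha hb y)
    (by
      rw [norm_ind, norm_ind]
      exact Eventually.of_forall fun y => conv_exists hb.norm hc.norm y)
    (by
      rw [norm_ind, norm_ind, norm_ind, conv_indicator]
      exact conv_exists ha.norm (hb.norm.lconv hc.norm) t)
  simpa only [conv_indicator, Set.indicator_of_mem (Set.mem_Ioi.2 ht)] using h

lemma hasDerivAt_prim {f : ℝ → ℝ} (hf : CMinusOne f) {t : ℝ} (ht : 0 < t) :
    HasDerivAt (fun u => ∫ s in (0:ℝ)..u, f s) (f t) t :=
  intervalIntegral.integral_hasDerivAt_right (hf.intervalIntegrable ht.le)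
    (hf.continuousOn.stronglyMeasurableAtFilter isOpen_Ioi t ht)
    (hf.continuousOn.continuousAt (Ioi_mem_nhds ht))

lemma tendsto_prim {f : ℝ → ℝ} (hf : CMinusOne f) :
    Tendsto (fun u => ∫ s in (0:ℝ)..u, f s) (nhdsWithin 0 (Set.Ioi 0)) (nhds 0) := by
  have h := intervalIntegral.continuousOn_primitive_interval (μ := volume) (f := f) (a := 0) (b := 1)
    (by
      rw [Set.uIcc_of_le zero_le_one, integrableOn_Icc_iff_integrableOn_Ioc,
        ← intervalIntegrable_iff_integrableOn_Ioc_of_le zero_le_one]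
      exact hf.intervalIntegrable zero_le_one)
  have h0 := h 0 (by simp)
  rw [Set.uIcc_of_le zero_le_one] at h0
  have := h0.tendsto
  simp only [intervalIntegral.integral_same] at this
  refine this.mono_left ?_
  rw [← nhdsWithin_Ioo_eq_nhdsGT (zero_lt_one' ℝ)]
  exact nhdsWithin_mono _ Set.Ioo_subset_Icc_self

/-- Characterization of the space `C_{-1,(k)}(0,∞)`: for `(κ, k) ∈ L₁` and
`f ∈ C_{-1}(0,∞)`, one has `f = k * φ` with some `φ ∈ C_{-1}(0,∞)` if and only if
`κ * f ∈ C¹_{-1}(0,∞)` and `lim_{t→0+} (κ * f)(t) = 0`. -/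
theorem CMinusOne_k_characterization (κ k f : ℝ → ℝ) (hκk : SoninPair κ k)
    (hf : CMinusOne f) :
    (∃ φ : ℝ → ℝ, CMinusOne φ ∧ ∀ t > (0:ℝ), f t = lconv k φ t) ↔
      (CMinusOneC1 (lconv κ f) ∧
        Tendsto (lconv κ f) (nhdsWithin 0 (Set.Ioi 0)) (nhds 0)) := by
  obtain ⟨hκ, hk, hone⟩ := hκk
  constructor
  · rintro ⟨φ, hφ, hfφ⟩
    have key : ∀ t > (0:ℝ), lconv κ f t = ∫ s in (0:ℝ)..t, φ s := by
      intro t ht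
      rw [lconv_congr_right hfφ ht, ← lconv_assoc hκ hk hφ ht, lconv_congr_left hone ht, lconv_one]
    have hd : ∀ t > (0:ℝ), HasDerivAt (lconv κ f) (φ t) t := by
      intro t ht
      refine (hasDerivAt_prim hφ ht).congr_of_eventuallyEq ?_
      filter_upwards [Ioi_mem_nhds ht] with u hu using key u hu
    have hlim : Tendsto (lconv κ f) (nhdsWithin 0 (Set.Ioi 0)) (nhds 0) := by
      refine (tendsto_prim hφ).congr' ?_
      filter_upwards [self_mem_nhdsWithin] with u hu using (key u hu).symm
    exact ⟨⟨hκ.lconv hf, fun t ht => (hd t ht).differentiableAt, ⟨0, hlim⟩,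
      hφ.congr fun t ht => (hd t ht).deriv⟩, hlim⟩
  · rintro ⟨⟨-, hdiff, -, hφ⟩, hlim⟩
    refine ⟨deriv (lconv κ f), hφ, ?_⟩
    have h1 : ∀ t > (0:ℝ), lconv κ f t = lconv (fun _ => 1) (deriv (lconv κ f)) t := by
      intro t ht
      rw [lconv_one, intervalIntegral.integral_eq_sub_of_hasDerivAt_of_tendsto ht
        (fun x hx => (hdiff x hx.1).hasDerivAt) (hφ.intervalIntegrable ht.le) hlim
        ((hdiff t ht).continuousAt.tendsto.mono_left nhdsWithin_le_nhds), sub_zero]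
    have hkφ := hk.lconv hφ
    have h2 : ∀ t > (0:ℝ), (∫ s in (0:ℝ)..t, f s) =
        ∫ s in (0:ℝ)..t, lconv k (deriv (lconv κ f)) s := by
      intro t ht
      rw [← lconv_one, ← lconv_one, ← lconv_assoc cMinusOne_one hk hφ ht,
        lconv_comm (fun _ => 1) k, lconv_assoc hk cMinusOne_one hφ ht,
        ← lconv_congr_right h1 ht, ← lconv_assoc hk hκ hf ht, lconv_comm k κ,
        lconv_congr_left hone ht]
    intro t ht
    refine (hasDerivAt_prim hf ht).unique ((hasDerivAt_prim hkφ ht).congr_of_eventuallyEq ?_)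
    filter_upwards [Ioi_mem_nhds ht] with u hu using h2 u hu
end

section
/- Second fundamental theorem of FC for the general fractional derivative of Caputo type: let (κ, k) ∈ L₁ and f ∈ C¹_{-1}(0,∞). Then for all t > 0, (κ * ( *D_{(k)} f))(t) = f(t) − f(0), where f(0) = lim_{s→0+} f(s). -/
open Real Filter MeasureTheory intervalIntegral

/-- Auxiliary class: integrable functions vanishing on `(-∞,0]` and bounded away from `0`. -/
structure NiceFn (g : ℝ → ℝ) : Prop where
  int : Integrable g volume
  zero : ∀ x ≤ 0, g x = 0
  bdd : ∀ ε > 0, ∃ C, 0 ≤ C ∧ ∀ x ≥ ε, |g x| ≤ C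

noncomputable def cutFn (T : ℝ) (g : ℝ → ℝ) : ℝ → ℝ := Set.indicator (Set.Ioc 0 T) g

noncomputable def cvFn (f g : ℝ → ℝ) : ℝ → ℝ :=
  MeasureTheory.convolution f g (ContinuousLinearMap.mul ℝ ℝ) volume

lemma cvFn_apply (f g : ℝ → ℝ) (x : ℝ) : cvFn f g x = ∫ t, f t * g (x - t) := rfl

lemma cvFn_swap (f g : ℝ → ℝ) (x : ℝ) : cvFn f g x = ∫ t, f (x - t) * g t :=
  convolution_mul_swap

lemma cvFn_comm (f g : ℝ → ℝ) : cvFn f g = cvFn g f := by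
  ext x
  rw [cvFn_swap, cvFn_apply]
  simp_rw [mul_comm]

lemma cutFn_of_mem {T : ℝ} {g : ℝ → ℝ} {x : ℝ} (h0 : 0 < x) (hT : x ≤ T) :
    cutFn T g x = g x := Set.indicator_of_mem (Set.mem_Ioc.2 ⟨h0, hT⟩) g

lemma CMinusOne.nice_cut {f : ℝ → ℝ} (hf : CMinusOne f) {T : ℝ} (hT : 0 < T) :
    NiceFn (cutFn T f) := by
  obtain ⟨p, hp, f₁, hc, hfe⟩ := hf
  have hc' : ContinuousOn f₁ (Set.Icc 0 T) := hc.mono Set.Icc_subset_Ici_self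
  refine ⟨?_, ?_, ?_⟩
  · rw [cutFn, integrable_indicator_iff measurableSet_Ioc]
    have h1 : IntervalIntegrable (fun x : ℝ => x ^ p * f₁ x) volume 0 T := by
      apply (intervalIntegrable_rpow' hp).mul_continuousOn
      rwa [Set.uIcc_of_le hT.le]
    rw [intervalIntegrable_iff_integrableOn_Ioc_of_le hT.le] at h1
    exact h1.congr_fun (fun x hx => (hfe x hx.1).symm) measurableSet_Ioc
  · intro x hx
    exact Set.indicator_of_notMem (fun h => absurd h.1 (not_lt.2 hx)) _
  · intro ε hε
    have hcc : ContinuousOn (fun x : ℝ => x ^ p * f₁ x) (Set.Icc ε T) := by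
      apply ContinuousOn.mul
      · intro x hx
        exact (Real.continuousAt_rpow_const x p (Or.inl (by linarith [hx.1]))).continuousWithinAt
      · exact hc.mono (fun x hx => hε.le.trans hx.1)
    obtain ⟨C, hC⟩ := isCompact_Icc.exists_bound_of_continuousOn hcc
    refine ⟨max C 0, le_max_right _ _, fun x hx => ?_⟩
    by_cases hxT : x ≤ T
    · have h0 : 0 < x := lt_of_lt_of_le hε hx
      rw [cutFn_of_mem h0 hxT, hfe x h0]
      exact (hC x ⟨hx, hxT⟩).trans (le_max_left _ _)
    · rw [cutFn, Set.indicator_of_notMem (fun h => hxT h.2)]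
      simp

lemma NiceFn.bound {f g : ℝ → ℝ} (hf : NiceFn f) (hg : NiceFn g) {ε : ℝ} (hε : 0 < ε) :
    ∃ A B : ℝ, 0 ≤ A ∧ 0 ≤ B ∧ ∀ x ≥ ε, ∀ t, |f t * g (x - t)| ≤ A * |g (x - t)| + B * |f t| := by
  obtain ⟨A, hA0, hA⟩ := hf.bdd (ε / 2) (by linarith)
  obtain ⟨B, hB0, hB⟩ := hg.bdd (ε / 2) (by linarith)
  refine ⟨A, B, hA0, hB0, fun x hx t => ?_⟩
  rw [abs_mul]
  rcases le_total (ε / 2) t with h | h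
  · have := mul_le_mul_of_nonneg_right (hA t h) (abs_nonneg (g (x - t)))
    have := mul_nonneg hB0 (abs_nonneg (f t))
    linarith
  · have := mul_le_mul_of_nonneg_left (hB (x - t) (by linarith)) (abs_nonneg (f t))
    have := mul_nonneg hA0 (abs_nonneg (g (x - t)))
    linarith

lemma NiceFn.integrable_mul {f g : ℝ → ℝ} (hf : NiceFn f) (hg : NiceFn g) (x : ℝ) :
    Integrable (fun t => f t * g (x - t)) volume := by
  rcases le_or_gt x 0 with hx | hx
  · have : (fun t => f t * g (x - t)) = fun _ => 0 := by
      ext t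
      rcases le_or_gt t 0 with h | h
      · rw [hf.zero t h, zero_mul]
      · rw [hg.zero _ (by linarith), mul_zero]
    rw [this]; exact integrable_zero _ _ _
  · obtain ⟨A, B, -, -, h⟩ := hf.bound hg hx
    have h2 := hg.int.comp_sub_left x
    refine Integrable.mono' ((h2.abs.const_mul A).add (hf.int.abs.const_mul B))
      (hf.int.aestronglyMeasurable.mul h2.aestronglyMeasurable)
      (Eventually.of_forall fun t => h x le_rfl t)

lemma NiceFn.exists {f g : ℝ → ℝ} (hf : NiceFn f) (hg : NiceFn g) (x : ℝ) :
    ConvolutionExistsAt f g x (ContinuousLinearMap.mul ℝ ℝ) volume := hf.integrable_mul hg x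

lemma NiceFn.abs {f : ℝ → ℝ} (hf : NiceFn f) : NiceFn (fun x => ‖f x‖) :=
  ⟨hf.int.norm, fun x hx => by simp [hf.zero x hx], fun ε hε => by simpa using hf.bdd ε hε⟩

lemma NiceFn.cv {f g : ℝ → ℝ} (hf : NiceFn f) (hg : NiceFn g) : NiceFn (cvFn f g) := by
  refine ⟨hf.int.integrable_convolution _ hg.int, fun x hx => ?_, fun ε hε => ?_⟩
  · rw [cvFn_apply]
    have : (fun t => f t * g (x - t)) = fun _ => 0 := by
      ext t
      rcases le_or_gt t 0 with h | h
      · rw [hf.zero t h, zero_mul]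
      · rw [hg.zero _ (by linarith), mul_zero]
    rw [this]; simp
  · obtain ⟨A, B, hA, hB, h⟩ := hf.bound hg hε
    refine ⟨A * (∫ t, |g t|) + B * ∫ t, |f t|, ?_, fun x hx => ?_⟩
    · have h1 : 0 ≤ ∫ t, |g t| := integral_nonneg fun _ => abs_nonneg _
      have h2 : 0 ≤ ∫ t, |f t| := integral_nonneg fun _ => abs_nonneg _
      positivity
    · have h2 := hg.int.comp_sub_left x
      have h3 : ∫ t, (A * |g (x - t)| + B * |f t|) = A * (∫ t, |g t|) + B * ∫ t, |f t| := by
        rw [integral_add (h2.abs.const_mul A) (hf.int.abs.const_mul B),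
          MeasureTheory.integral_const_mul, MeasureTheory.integral_const_mul,
          integral_sub_left_eq_self (fun t => |g t|) volume x]
      rw [← h3, cvFn_apply]
      rw [← Real.norm_eq_abs]
      exact MeasureTheory.norm_integral_le_of_norm_le (g := fun t => A * |g (x - t)| + B * |f t|) ((h2.abs.const_mul A).add (hf.int.abs.const_mul B))
        (Eventually.of_forall fun t => h x hx t)

lemma NiceFn.assoc {f g h : ℝ → ℝ} (hf : NiceFn f) (hg : NiceFn g) (hh : NiceFn h) :
    cvFn (cvFn f g) h = cvFn f (cvFn g h) := by
  ext x
  exact convolution_assoc (ContinuousLinearMap.mul ℝ ℝ) (ContinuousLinearMap.mul ℝ ℝ)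
    (ContinuousLinearMap.mul ℝ ℝ) (ContinuousLinearMap.mul ℝ ℝ)
    (fun a b c => by simp [mul_assoc]) hf.int.aestronglyMeasurable hg.int.aestronglyMeasurable
    hh.int.aestronglyMeasurable (Eventually.of_forall fun y => hf.exists hg y)
    (Eventually.of_forall fun y => hg.abs.exists hh.abs y)
    (hf.abs.exists (hg.abs.cv hh.abs) x)

lemma lconv_congr_Ioo {f f' g g' : ℝ → ℝ} {t : ℝ} (ht : 0 ≤ t)
    (hf : ∀ x, 0 < x → x < t → f x = f' x) (hg : ∀ᵐ x, 0 < x → x < t → g x = g' x) :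
    lconv f g t = lconv f' g' t := by
  unfold lconv
  rw [integral_of_le ht, integral_of_le ht, integral_Ioc_eq_integral_Ioo,
    integral_Ioc_eq_integral_Ioo]
  refine setIntegral_congr_ae measurableSet_Ioo ?_
  filter_upwards [hg] with x hx hxm
  rw [hf (t - x) (by linarith [hxm.2]) (by linarith [hxm.1]), hx hxm.1 hxm.2]

lemma lconv_eq_cvFn {f g : ℝ → ℝ} (hf : ∀ x ≤ 0, f x = 0) (hg : ∀ x ≤ 0, g x = 0) {t : ℝ}
    (ht : 0 ≤ t) : lconv f g t = cvFn f g t := by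
  unfold lconv
  rw [integral_of_le ht, cvFn_swap]
  refine setIntegral_eq_integral_of_forall_compl_eq_zero fun x hx => ?_
  rcases le_or_gt x 0 with h | h
  · rw [hg x h, mul_zero]
  · rw [hf _ , zero_mul]
    by_contra h'
    exact hx ⟨h, by linarith⟩

theorem second_fundamental_theorem_Caputo (κ k f : ℝ → ℝ) (f0 : ℝ)
    (hκk : SoninPair κ k) (hf : CMinusOne f)
    (hdiff : ∀ t > (0:ℝ), DifferentiableAt ℝ f t)
    (hf0 : Tendsto f (nhdsWithin 0 (Set.Ioi 0)) (nhds f0))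
    (hder : CMinusOne (deriv f)) :
    ∀ t > (0:ℝ),
      lconv κ (fun s => deriv (lconv k f) s - f0 * k s) t = f t - f0 := by
  intro T hT
  obtain ⟨hκ, hk, hS⟩ := hκk
  have h1C : CMinusOne (fun _ => (1:ℝ)) :=
    ⟨0, by norm_num, fun _ => 1, continuousOn_const, fun t _ => by simp⟩
  have nκ := hκ.nice_cut hT
  have nk := hk.nice_cut hT
  have nh := hder.nice_cut hT
  have n1 := h1C.nice_cut hT
  set K := cutFn T κ with hK
  set k' := cutFn T k with hk'
  set h := cutFn T (deriv f) with hh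
  set o := cutFn T (fun _ => (1:ℝ)) with ho
  -- convolution with one is the primitive
  have hone : ∀ g : ℝ → ℝ, NiceFn g → ∀ s, 0 < s → s ≤ T → cvFn g o s = ∫ x in (0:ℝ)..s, g x := by
    intro g hg s h0 hs
    rw [cvFn_comm, ← lconv_eq_cvFn n1.zero hg.zero h0.le,
      lconv_congr_Ioo (f' := fun _ => 1) (g' := g) h0.le
        (fun x h1 h2 => cutFn_of_mem h1 (by linarith)) (Eventually.of_forall fun _ _ _ => rfl)]
    simp [lconv]
  -- fundamental theorem of calculus
  have hftc : ∀ s, 0 < s → s ≤ T → cvFn h o s = f s - f0 := by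
    intro s h0 hs
    rw [hone h nh s h0 hs]
    refine integral_eq_sub_of_hasDerivAt_of_tendsto h0 (f := f) (fun x hx => ?_)
      nh.int.intervalIntegrable hf0 ((hdiff s h0).continuousAt.tendsto.mono_left nhdsWithin_le_nhds)
    rw [hh, cutFn_of_mem hx.1 (by linarith [hx.2])]
    exact (hdiff x hx.1).hasDerivAt
  have nkh := nk.cv nh
  -- the convolution of `k` and `f` as a primitive
  have hprim : ∀ s, 0 < s → s ≤ T →
      lconv k f s = ∫ x in (0:ℝ)..s, (f0 * k' x + cvFn k' h x) := by
    intro s h0 hs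
    have n1h := nh.cv n1
    have e1 : lconv k f s = lconv k' (f0 • o + cvFn h o) s := by
      refine lconv_congr_Ioo h0.le (fun x h1 h2 => (cutFn_of_mem h1 (by linarith)).symm)
        (Eventually.of_forall fun x h1 h2 => ?_)
      simp only [Pi.add_apply, Pi.smul_apply, smul_eq_mul]
      rw [hftc x h1 (by linarith), ho, cutFn_of_mem h1 (by linarith)]
      ring
    rw [e1, lconv_eq_cvFn nk.zero (fun x hx => by simp [n1.zero x hx, n1h.zero x hx]) h0.le,
      integral_add (nk.int.const_mul f0).intervalIntegrable nkh.int.intervalIntegrable,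
      intervalIntegral.integral_const_mul, ← hone k' nk s h0 hs, ← hone _ nkh s h0 hs,
      nk.assoc nh n1]
    have e2 : ∀ t, k' t * (f0 • o + cvFn h o) (s - t)
        = f0 * (k' t * o (s - t)) + k' t * cvFn h o (s - t) := by
      intro t
      simp only [Pi.add_apply, Pi.smul_apply, smul_eq_mul]
      ring
    rw [cvFn_apply]
    simp_rw [e2]
    rw [MeasureTheory.integral_add ((nk.integrable_mul n1 s).const_mul f0)
      (nk.integrable_mul n1h s), MeasureTheory.integral_const_mul]
    rfl
  have hD : ∀ᵐ s, 0 < s → s < T → deriv (lconv k f) s - f0 * k s = cvFn k' h s := by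
    have hint : Integrable (fun x => f0 * k' x + cvFn k' h x) volume :=
      (nk.int.const_mul f0).add nkh.int
    filter_upwards [LocallyIntegrable.ae_hasDerivAt_integral hint.locallyIntegrable] with s hs h0 hsT
    have e : lconv k f =ᶠ[nhds s] fun s => ∫ x in (0:ℝ)..s, (f0 * k' x + cvFn k' h x) := by
      filter_upwards [Ioo_mem_nhds h0 hsT] with y hy
      exact hprim y hy.1 hy.2.le
    rw [((hs 0).congr_of_eventuallyEq e).deriv, hk', cutFn_of_mem h0 hsT.le]
    ring
  rw [lconv_congr_Ioo (f' := K) hT.le (fun x h1 h2 => (cutFn_of_mem h1 h2.le).symm) hD,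
    lconv_eq_cvFn nκ.zero nkh.zero hT.le, ← nκ.assoc nk nh, ← hftc T hT le_rfl, cvFn_comm,
    ← lconv_eq_cvFn nh.zero (nκ.cv nk).zero hT.le, ← lconv_eq_cvFn nh.zero n1.zero hT.le]
  refine lconv_congr_Ioo hT.le (fun _ _ _ => rfl) (Eventually.of_forall fun x h1 h2 => ?_)
  rw [ho, cutFn_of_mem h1 h2.le, ← hS x h1, ← lconv_eq_cvFn nκ.zero nk.zero h1.le]
  exact lconv_congr_Ioo h1.le (fun y h3 h4 => cutFn_of_mem h3 (by linarith))
    (Eventually.of_forall fun y h3 h4 => cutFn_of_mem h3 (by linarith))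
end
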